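/- arXiv:1306.4791 — 3 statements merged into one kernel-verified Lean document; each statement's English description precedes it below -/
import Mathlib

section
/- Let K be a UFD of characteristic p > 0, let f ∈ K[x,y] \ K[x^p,y^p], and let d = c·d_f for some invertible element c ∈ K, with d(x) and d(y) coprime. Then f − f_{(p)} is nonzero, belongs to K[x,y]^d, has minimal total degree among all nonzero polynomials of the form h − h_{(p)} (h ∈ K[x,y]) belonging to K[x,y]^d, and f − f_{(p)} is not divisible by any non-invertible element of K \ {0}. -/
/-!
Write `F = f - f_(p)` and `f_x`, `f_y` for the partial derivatives. Polynomials in `x^p, y^p` have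
zero partial derivatives, so `F_x = f_x` and `F_y = f_y`; hence `d F = c (f_x f_y - f_y f_x) = 0`,
and a constant `k` dividing `F` divides the coprime pair `d x`, `d y`, so it is a unit.

For minimality, let `H = h - h_(p)` be a nonzero constant of `d`, so `f_x h_y = f_y h_x`. As `f_x`
and `f_y` are coprime in a UFD, `h_x = a f_x` and `h_y = a f_y` for some `a`
(`exists_common_multiplier`). Every monomial of `F` or `H` has an exponent prime to `p`, so
differentiating a monomial of top degree with respect to that variable lowers the total degree by
exactly one (`exists_pderiv_totalDegree`). This gives `a ≠ 0` (from `H ≠ 0`), and, for a suitable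
variable, `deg F ≤ deg f_i + 1 ≤ deg (a f_i) + 1 = deg h_i + 1 ≤ deg H`.
-/

open MvPolynomial

/-- `f_{(p)}`: the coefficient `a₀₀ ∈ K[x^p,y^p]` in the unique representation
`f = Σ_{0≤i,j<p} a_{ij} x^i y^j` with `a_{ij} ∈ K[x^p,y^p]`; concretely it is the
sum of the monomials of `f` in which both exponents are divisible by `p`. -/
noncomputable def pPart {K : Type*} [CommRing K] (p : ℕ)
    (f : MvPolynomial (Fin 2) K) : MvPolynomial (Fin 2) K :=
  ∑ m ∈ f.support.filter (fun m => ∀ i, p ∣ m i), monomial m (coeff m f)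

lemma coeff_pPart {K : Type*} [CommRing K] (p : ℕ) (f : MvPolynomial (Fin 2) K)
    (m : Fin 2 →₀ ℕ) [Decidable (∀ i, p ∣ m i)] :
    coeff m (pPart p f) = if ∀ i, p ∣ m i then coeff m f else 0 := by
  classical
  simp only [pPart, coeff_sum, coeff_monomial, Finset.sum_ite_eq', Finset.mem_filter,
    mem_support_iff]
  by_cases h1 : coeff m f = 0 <;> by_cases h2 : ∀ i, p ∣ m i <;> simp [h1, h2]

lemma pderiv_pPart {K : Type*} [CommRing K] (p : ℕ) [CharP K p]
    (f : MvPolynomial (Fin 2) K) (i : Fin 2) : pderiv i (pPart p f) = 0 := by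
  rw [pPart, map_sum]
  refine Finset.sum_eq_zero fun m hm => ?_
  have h := (Finset.mem_filter.1 hm).2 i
  rw [pderiv_monomial, (CharP.cast_eq_zero_iff K p (m i)).2 h, mul_zero, monomial_zero]

lemma pPart_mem_adjoin {K : Type*} [CommRing K] (p : ℕ) (f : MvPolynomial (Fin 2) K) :
    pPart p f ∈ Algebra.adjoin K ({X 0 ^ p, X 1 ^ p} : Set (MvPolynomial (Fin 2) K)) := by
  refine Subalgebra.sum_mem _ fun m hm => ?_
  have h := (Finset.mem_filter.1 hm).2
  obtain ⟨a, ha⟩ := h 0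
  obtain ⟨b, hb⟩ := h 1
  have hmon : monomial m (coeff m f) =
      C (coeff m f) * ((X 0 ^ p) ^ a * (X 1 ^ p) ^ b : MvPolynomial (Fin 2) K) := by
    rw [monomial_eq, Finsupp.prod_fintype _ _ (by simp), Fin.prod_univ_two, ha, hb, pow_mul,
      pow_mul]
  rw [hmon]
  refine Subalgebra.mul_mem _ (Subalgebra.algebraMap_mem _ _) (Subalgebra.mul_mem _ ?_ ?_)
  · exact Subalgebra.pow_mem _ (Algebra.subset_adjoin (by simp)) _
  · exact Subalgebra.pow_mem _ (Algebra.subset_adjoin (by simp)) _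

lemma totalDegree_pderiv_add_one_le {K : Type*} [CommRing K] (g : MvPolynomial (Fin 2) K)
    (i : Fin 2) (hg : pderiv i g ≠ 0) : (pderiv i g).totalDegree + 1 ≤ g.totalDegree := by
  obtain ⟨m, hm, hdeg⟩ := Finset.exists_mem_eq_sup _ (support_nonempty.2 hg)
    (fun s : Fin 2 →₀ ℕ => s.sum fun _ e => e)
  change (pderiv i g).totalDegree = _ at hdeg
  rw [mem_support_iff, coeff_pderiv] at hm
  have h := le_totalDegree (mem_support_iff.2 (left_ne_zero_of_mul hm))
  rw [Finsupp.sum_add_index' (by simp) (by simp), Finsupp.sum_single_index rfl] at h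
  rwa [hdeg]

/-- Some exponent of a top-degree monomial of `f - f_(p)` is prime to `p`; the partial derivative
in that variable does not kill the monomial. -/
lemma exists_pderiv_totalDegree {K : Type*} [CommRing K] [IsDomain K] (p : ℕ) [CharP K p]
    (f : MvPolynomial (Fin 2) K) (hF : f - pPart p f ≠ 0) :
    ∃ i, pderiv i f ≠ 0 ∧ (f - pPart p f).totalDegree ≤ (pderiv i f).totalDegree + 1 := by
  classical
  obtain ⟨m, hm, hdeg⟩ := Finset.exists_mem_eq_sup _ (support_nonempty.2 hF)
    (fun s : Fin 2 →₀ ℕ => s.sum fun _ e => e)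
  change (f - pPart p f).totalDegree = _ at hdeg
  rw [mem_support_iff, coeff_sub, coeff_pPart] at hm
  by_cases hp : ∀ i, p ∣ m i
  · simp [hp] at hm
  rw [if_neg hp, sub_zero] at hm
  obtain ⟨i, hi⟩ := not_forall.1 hp
  have hi0 : m i ≠ 0 := fun h => hi (h ▸ dvd_zero p)
  obtain ⟨n, rfl⟩ : ∃ n, m = n + Finsupp.single i 1 :=
    ⟨m - Finsupp.single i 1, (Finsupp.sub_add_single_one_cancel hi0).symm⟩
  have hn : coeff n (pderiv i f) ≠ 0 := by
    rw [coeff_pderiv]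
    refine mul_ne_zero hm fun h => hi ?_
    rw [← CharP.cast_eq_zero_iff K p]
    simpa using h
  refine ⟨i, fun h => hn (by rw [h, coeff_zero]), ?_⟩
  have h := le_totalDegree (mem_support_iff.2 hn)
  rw [hdeg, Finsupp.sum_add_index' (by simp) (by simp), Finsupp.sum_single_index rfl]
  exact Nat.add_le_add_right h 1

lemma exists_common_multiplier {R : Type*} [CommRing R] [IsDomain R] [DecompositionMonoid R]
    {u v s t : R} (huv : IsRelPrime u v) (h : u * t = v * s) : ∃ a, s = a * u ∧ t = a * v := by
  by_cases hu : u = 0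
  · subst hu
    have hv : IsUnit v := isRelPrime_zero_left.1 huv
    have hs : s = 0 := by simpa [hv.ne_zero] using h
    obtain ⟨a, ha⟩ := hv.dvd (a := t)
    exact ⟨a, by simp [hs], by rw [ha, mul_comm]⟩
  · obtain ⟨a, ha⟩ := huv.dvd_of_dvd_mul_left ⟨t, h.symm⟩
    refine ⟨a, by rw [ha, mul_comm], mul_left_cancel₀ hu ?_⟩
    rw [h, ha]; ring

/-- (2) ⇒ (4) of Proposition 1.  If `f ∈ K[x,y] \ K[x^p,y^p]` and
`d = c·d_f` for an invertible `c ∈ K`, with `d(x), d(y)` coprime, then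
`f − f_{(p)}` is a nonzero constant of `d`, of minimal total degree among nonzero
constants of `d` of the form `h − h_{(p)}`, and `f − f_{(p)}` is not divisible by
any noninvertible nonzero element of `K`. -/
theorem proposition1_2_implies_4
    {K : Type*} [CommRing K] [IsDomain K] [UniqueFactorizationMonoid K]
    (p : ℕ) [Fact p.Prime] [CharP K p]
    (f : MvPolynomial (Fin 2) K)
    (hf : f ∉ Algebra.adjoin K ({X 0 ^ p, X 1 ^ p} : Set (MvPolynomial (Fin 2) K)))
    (c : K) (hc : IsUnit c)
    (d : Derivation K (MvPolynomial (Fin 2) K) (MvPolynomial (Fin 2) K))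
    (hdf : ∀ g, d g = C c * (pderiv (0 : Fin 2) f * pderiv (1 : Fin 2) g
                           - pderiv (1 : Fin 2) f * pderiv (0 : Fin 2) g))
    (hcop : ∀ q : MvPolynomial (Fin 2) K, q ∣ d (X 0) → q ∣ d (X 1) → IsUnit q) :
    f - pPart p f ≠ 0 ∧
    d (f - pPart p f) = 0 ∧
    (∀ h : MvPolynomial (Fin 2) K, h - pPart p h ≠ 0 → d (h - pPart p h) = 0 →
      (f - pPart p f).totalDegree ≤ (h - pPart p h).totalDegree) ∧
    (∀ k : K, k ≠ 0 → C k ∣ (f - pPart p f) → IsUnit k) := by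
  have hpd (g : MvPolynomial (Fin 2) K) (i : Fin 2) : pderiv i (g - pPart p g) = pderiv i g := by
    rw [map_sub, pderiv_pPart, sub_zero]
  have hd0 : d (X 0) = C c * -pderiv 1 f := by rw [hdf]; simp
  have hd1 : d (X 1) = C c * pderiv 0 f := by rw [hdf]; simp
  have hrel : IsRelPrime (pderiv 0 f) (pderiv 1 f) := fun q h0 h1 =>
    hcop q (hd0 ▸ (h1.neg_right.mul_left _)) (hd1 ▸ h0.mul_left _)
  have hF : f - pPart p f ≠ 0 := fun h => hf (sub_eq_zero.1 h ▸ pPart_mem_adjoin p f)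
  refine ⟨hF, ?_, fun h hH hdH => ?_, fun k _ hkF => ?_⟩
  · rw [hdf, hpd, hpd]; ring
  · rw [hdf, hpd, hpd] at hdH
    have heq := sub_eq_zero.1 ((mul_eq_zero.1 hdH).resolve_left ((hc.map C).ne_zero))
    obtain ⟨a, ha0, ha1⟩ := exists_common_multiplier hrel heq
    have ha : ∀ i, pderiv i h = a * pderiv i f := by
      intro i; fin_cases i
      exacts [ha0, ha1]
    obtain ⟨j, hj, -⟩ := exists_pderiv_totalDegree p h hH
    have ha_ne : a ≠ 0 := left_ne_zero_of_mul (ha j ▸ hj)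
    obtain ⟨i, hi, hdeg⟩ := exists_pderiv_totalDegree p f hF
    have hlow := totalDegree_pderiv_add_one_le (h - pPart p h) i
      (by rw [hpd, ha]; exact mul_ne_zero ha_ne hi)
    rw [hpd, ha, totalDegree_mul_of_isDomain ha_ne hi] at hlow
    lia
  · obtain ⟨g, hg⟩ := hkF
    have hdvd (i : Fin 2) : C k ∣ pderiv i f := ⟨pderiv i g, by rw [← hpd, hg, pderiv_C_mul]⟩
    -- the constant-coefficient map is a left inverse of `C`, so it carries the unit back to `K`
    simpa using (hrel (hdvd 0) (hdvd 1)).map constantCoeff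
end

section
/- Let K be a UFD of characteristic p > 0 and let d be a nonzero K-derivation of K[x,y] such that d(x) and d(y) are coprime. The following conditions are equivalent: (1) K[x,y]^d = K[x^p, y^p, f] for some polynomial f ∈ K[x,y] \ K[x^p,y^p]; (2) d is a Jacobian derivation, i.e. d = d_g for some g ∈ K[x,y]; (3) d* = 0 and K[x,y]^d ≠ K[x^p, y^p]; (4) there exists f ∈ K[x,y] \ K[x^p,y^p] such that d(f) = 0 and d(f̄) = 0, where f̄ = gcd(∂f/∂x, ∂f/∂y). -/
/-!
Write `B = K[x^p, y^p]`, the common kernel of the partial derivatives, and call its elements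
constants. Let `ω = d(y) dx - d(x) dy` be the form dual to `d`. As `d(x)` and `d(y)` are coprime,
`d q = 0` holds exactly when the differential `dq` equals `t ω` for some `t`, and comparing mixed
partial derivatives gives `d t = - t d*`. Condition (2) says that `ω` is the differential of some
`g`; then `d g = 0`, `d* = 0` and the partial derivatives of `g` are coprime, which yields (3) and
(4). Under (4), `df = h ω` with `h` the gcd of the partial derivatives of `f` up to a unit; so
`d h = 0`, hence `h d* = 0` and `d* = 0`.

(3) ⇒ (2): if `d* = 0`, the quotient `t` in `dq = t ω` is again in the kernel of `d` and has smaller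
degree than `q`. Starting from a nonconstant element of the kernel, one reaches `s` with
`ds = c ω`, where `c ≠ 0` is constant (`exists_const_multiple`). The Euler operators
`E = xᵢ ∂/∂xᵢ` satisfy `E ^ p = E`, so they split off the constant part `s₀` of `s`; as `c` divides
`ds`, it divides `s - s₀` (`exists_const_part`), and `ω` is the differential of `(s - s₀) / c`.

(2) ⇒ (1): on the kernel of `d`, the map `δ : q ↦ t` with `dq = t dg` is a locally nilpotent
derivation `d/dg`. Nonzero elements `q, δ q, δ² q, …` are linearly independent over the kernel of
some `∂/∂xᵢ`, over which `K[x,y]` has rank `p`; so `δ ^ p = 0`, and integrating at most `p - 1`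
times writes `q` as `∑ k < p, cₖ gᵏ` with constant `cₖ` (`exists_expansion_of_jacobian`).

(1) ⇒ (2): `df = h ω`, and the claim is that `h` is a unit. Otherwise a prime `π` divides both
partial derivatives of `f`. If `π` is constant, `exists_const_part` gives a constant `s₀` with
`π ∣ f - s₀`; the quotient lies in the kernel `B[f]`, which contradicts the linear independence of
`1, f, …, f ^ (p - 1)` over `B`. If `π` is not constant, a rank argument gives constants `β`, `γ`
with `π ∤ β` and `π ∣ γ + β f` (`exists_linear_mod_prime`). Differentiation gives
`π ^ 2 ∣ γ + β f`, so the constant `π ^ p` divides `(γ + β f) ^ (p - 1)` with quotient in `B[f]`;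
comparing the coefficients of `f ^ (p - 1)` gives `π ∣ β`, a contradiction
(`not_prime_dvd_pderiv`).
-/

open MvPolynomial

section Helpers

set_option linter.unusedSectionVars false

variable {K : Type*} [CommRing K]

/-! ### Partial derivatives -/

lemma pderiv_comm_apply (i j : Fin 2) (q : MvPolynomial (Fin 2) K) :
    pderiv i (pderiv j q) = pderiv j (pderiv i q) := by
  have h : ⁅(pderiv i : Derivation K (MvPolynomial (Fin 2) K) _),
      (pderiv j : Derivation K (MvPolynomial (Fin 2) K) _)⁆ = 0 := by
    apply MvPolynomial.derivation_ext
    intro k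
    simp [Derivation.commutator_apply, pderiv_X, Pi.single_apply]
    split_ifs <;> simp
  have := congrArg (fun D => D q) h
  simpa [Derivation.commutator_apply, sub_eq_zero] using this

lemma derivation_eq_pderiv
    (d : Derivation K (MvPolynomial (Fin 2) K) (MvPolynomial (Fin 2) K))
    (q : MvPolynomial (Fin 2) K) :
    d q = d (X 0) * pderiv 0 q + d (X 1) * pderiv 1 q := by
  have h : d = d (X 0) • pderiv 0 + d (X 1) • pderiv 1 := by
    apply MvPolynomial.derivation_ext
    intro k
    fin_cases k <;> simp
  conv_lhs => rw [h]
  simp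

variable [IsDomain K]

lemma totalDegree_pderiv_lt (i : Fin 2) (q : MvPolynomial (Fin 2) K) (h : pderiv i q ≠ 0) :
    (pderiv i q).totalDegree < q.totalDegree := by
  obtain ⟨m, hm, hmd⟩ := Finset.exists_mem_eq_sup _ (support_nonempty.mpr h)
    (fun m => m.sum fun _ e => e)
  rw [totalDegree, hmd]
  have hc : m + Finsupp.single i 1 ∈ q.support := by
    rw [mem_support_iff, coeff_pderiv] at hm
    rw [mem_support_iff]
    exact left_ne_zero_of_mul hm
  have := le_totalDegree hc
  rw [Finsupp.sum_add_index' (by simp) (by simp)] at this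
  simp at this
  omega

/-- A nonzero partial derivative has smaller degree, so it is no multiple of the polynomial. -/
lemma not_dvd_pderiv (i : Fin 2) (q : MvPolynomial (Fin 2) K) (h : pderiv i q ≠ 0) :
    ¬ q ∣ pderiv i q := by
  rintro ⟨t, ht⟩
  have h1 := totalDegree_pderiv_lt i q h
  rw [ht] at h h1
  rw [totalDegree_mul_of_isDomain (left_ne_zero_of_mul h) (right_ne_zero_of_mul h)] at h1
  omega

variable (p : ℕ) [Fact p.Prime] [CharP K p]

lemma pderiv_pow_char (i : Fin 2) (q : MvPolynomial (Fin 2) K) : pderiv i (q ^ p) = 0 := by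
  rw [pderiv_pow, CharP.cast_eq_zero]; simp

/-- `K[x^p, y^p]` is the common kernel of the partial derivatives. -/
lemma mem_adjoin_iff (q : MvPolynomial (Fin 2) K) :
    q ∈ Algebra.adjoin K ({X 0 ^ p, X 1 ^ p} : Set (MvPolynomial (Fin 2) K)) ↔
      ∀ i, pderiv i q = 0 := by
  constructor
  · intro h i
    induction h using Algebra.adjoin_induction with
    | mem x hx =>
      rcases hx with rfl | rfl <;> exact pderiv_pow_char p i _
    | algebraMap r => simp [algebraMap_eq]
    | add x y _ _ hx hy => simp [hx, hy]
    | mul x y _ _ hx hy => simp [hx, hy]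
  · intro h
    rw [q.as_sum]
    refine Subalgebra.sum_mem _ fun m hm => ?_
    have hdiv : ∀ i, p ∣ m i := by
      intro i
      rcases Nat.eq_zero_or_pos (m i) with h0 | h0
      · simp [h0]
      have h1 := congrArg (coeff (m - Finsupp.single i 1)) (h i)
      have h2 : m - Finsupp.single i 1 + Finsupp.single i 1 = m := by
        ext j
        by_cases hj : i = j
        · subst hj; simp; omega
        · simp [hj]
      rw [coeff_pderiv, h2, coeff_zero] at h1
      have h3 := (mul_eq_zero.mp h1).resolve_left (mem_support_iff.mp hm)
      rw [← CharP.cast_eq_zero_iff K p]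
      have h4 : m i = (m - Finsupp.single i 1 : Fin 2 →₀ ℕ) i + 1 := by simp; omega
      rw [h4]; push_cast; exact h3
    obtain ⟨k0, hk0⟩ := hdiv 0
    obtain ⟨k1, hk1⟩ := hdiv 1
    rw [monomial_eq, Finsupp.prod_fintype _ _ (by simp)]
    simp only [Fin.prod_univ_two, hk0, hk1, pow_mul]
    refine Subalgebra.mul_mem _ (Subalgebra.algebraMap_mem _ _)
      (Subalgebra.mul_mem _ (Subalgebra.pow_mem _ ?_ _) (Subalgebra.pow_mem _ ?_ _)) <;>
    exact Algebra.subset_adjoin (by simp)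

/-! ### Euler operators and constant parts -/

/-- The Euler operator `q ↦ xᵢ ∂q/∂xᵢ`. -/
noncomputable def euler (i : Fin 2) : Module.End K (MvPolynomial (Fin 2) K) :=
  LinearMap.mulLeft K (X i) ∘ₗ (pderiv i : Derivation K _ _).toLinearMap

lemma euler_apply (i : Fin 2) (q : MvPolynomial (Fin 2) K) : euler i q = X i * pderiv i q := rfl

lemma euler_pow_monomial (i : Fin 2) (k : ℕ) (m : Fin 2 →₀ ℕ) (r : K) :
    (euler i ^ k) (monomial m r) = monomial m ((m i : K) ^ k * r) := by
  induction k with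
  | zero => simp
  | succ k ih =>
    rw [pow_succ', Module.End.mul_apply, ih, euler_apply, X_mul_pderiv_monomial]
    rw [← map_nsmul, nsmul_eq_mul, pow_succ', mul_assoc]

/-- Euler operators have eigenvalues in the prime field, so they satisfy `E ^ p = E`. -/
lemma euler_pow_char (i : Fin 2) (q : MvPolynomial (Fin 2) K) :
    (euler i ^ p) q = euler i q := by
  induction q using MvPolynomial.induction_on' with
  | monomial m r =>
    have := euler_pow_monomial i 1 m r
    rw [pow_one] at this
    rw [euler_pow_monomial, this]
    congr 2
    rw [pow_one]
    rw [← frobenius_def, map_natCast]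
  | add a b ha hb => simp [ha, hb]

/-- The witness is `s - E ^ (p - 1) s` with `E` the Euler operator, that is, the part of `s` in
which the `i`-th exponent is divisible by `p`. -/
lemma exists_const_part_step (p : ℕ) [Fact p.Prime] [CharP K p]
    (i : Fin 2) (s c : MvPolynomial (Fin 2) K)
    (hc : pderiv i c = 0) (hcs : c ∣ pderiv i s) :
    ∃ s0, pderiv i s0 = 0 ∧ c ∣ s - s0 ∧ ∀ j, j ≠ i → pderiv j s = 0 → pderiv j s0 = 0 := by
  have hp : 2 ≤ p := (Fact.out : p.Prime).two_le
  refine ⟨s - (euler i ^ (p - 1)) s, ?_, ?_, ?_⟩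
  · have h : euler i (s - (euler i ^ (p - 1)) s) = 0 := by
      rw [map_sub, ← Module.End.mul_apply, ← pow_succ', Nat.sub_add_cancel (by omega),
        euler_pow_char, sub_self]
    rw [euler_apply] at h
    exact (mul_eq_zero.mp h).resolve_left (X_ne_zero i)
  · rw [sub_sub_cancel]
    have : ∀ k, c ∣ (euler i ^ (k + 1)) s := by
      intro k
      induction k with
      | zero => simpa [euler_apply] using hcs.mul_left _
      | succ k ih =>
        obtain ⟨t, ht⟩ := ih
        rw [pow_succ', Module.End.mul_apply, ht, euler_apply, pderiv_mul, hc]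
        exact ⟨X i * pderiv i t, by ring⟩
    have h := this (p - 2)
    rwa [show p - 2 + 1 = p - 1 by omega] at h
  · intro j hj hs
    have : ∀ k, pderiv j ((euler i ^ k) s) = 0 := by
      intro k
      induction k with
      | zero => simpa using hs
      | succ k ih =>
        rw [pow_succ', Module.End.mul_apply, euler_apply, pderiv_mul, pderiv_X_of_ne hj.symm,
          pderiv_comm_apply, ih]
        simp
    rw [map_sub, hs, this, sub_zero]

/-- If a constant `c` divides the differential of `s`, then `s` is constant modulo `c`. -/
lemma exists_const_part (p : ℕ) [Fact p.Prime] [CharP K p] (s c : MvPolynomial (Fin 2) K)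
    (hc : ∀ i, pderiv i c = 0) (hcs : ∀ i, c ∣ pderiv i s) :
    ∃ s0, (∀ i, pderiv i s0 = 0) ∧ c ∣ s - s0 := by
  obtain ⟨u, hu, hcu, -⟩ := exists_const_part_step p 0 s c (hc 0) (hcs 0)
  have h1 : c ∣ pderiv 1 u := by
    obtain ⟨t, ht⟩ := hcu
    have : u = s - c * t := by rw [← ht]; ring
    rw [this, map_sub, pderiv_mul, hc]
    exact dvd_sub (hcs 1) ⟨pderiv 1 t, by ring⟩
  obtain ⟨s0, hs0, hcs0, hj⟩ := exists_const_part_step p 1 u c (hc 1) h1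
  refine ⟨s0, ?_, ?_⟩
  · intro i
    fin_cases i
    · exact hj 0 (by decide) hu
    · exact hs0
  · have : s - s0 = (s - u) + (u - s0) := by ring
    rw [this]; exact dvd_add hcu hcs0

/-! ### Expansions and rank over kernels of derivations -/

lemma exists_natCast_mul_eq_one {k : ℕ} (h0 : 0 < k) (hk : k < p) :
    ∃ u : MvPolynomial (Fin 2) K, (k : MvPolynomial (Fin 2) K) * u = 1 ∧ ∀ i, pderiv i u = 0 := by
  have hcop : Nat.Coprime k p :=
    (Nat.coprime_of_lt_prime (by omega) hk (Fact.out : p.Prime)).symm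
  have hb := Nat.gcd_eq_gcd_ab k p
  rw [hcop.gcd_eq_one] at hb
  have := congrArg (Int.cast (R := MvPolynomial (Fin 2) K)) hb
  simp only [Int.cast_add, Int.cast_mul, Int.cast_natCast, Nat.cast_one,
    CharP.cast_eq_zero (MvPolynomial (Fin 2) K) p, zero_mul, add_zero] at this
  exact ⟨(k.gcdA p : ℤ), by rw [← this]; simp, fun i => Derivation.map_intCast _ _⟩

/-- If `D t ∉ I` for a `D`-stable prime ideal `I`, then modulo `I` the powers
`1, t, …, t ^ (p - 1)` are linearly independent over the constants of `D`. -/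
lemma coeff_mem_of_sum_pow_mem
    (D : Derivation K (MvPolynomial (Fin 2) K) (MvPolynomial (Fin 2) K))
    (I : Ideal (MvPolynomial (Fin 2) K)) [I.IsPrime] (hI : ∀ q ∈ I, D q ∈ I)
    (t : MvPolynomial (Fin 2) K) (ht : D t ∉ I) (n : ℕ) (hn : n ≤ p)
    (e : ℕ → MvPolynomial (Fin 2) K) (he : ∀ k < n, D (e k) ∈ I)
    (hsum : ∑ k ∈ Finset.range n, e k * t ^ k ∈ I) : ∀ k < n, e k ∈ I := by
  induction n generalizing e with
  | zero => intro k hk; omega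
  | succ n ih =>
    have h1 : (∑ k ∈ Finset.range n, ((k + 1 : ℕ) * e (k + 1)) * t ^ k) * D t ∈ I := by
      have h2 := hI _ hsum
      rw [map_sum] at h2
      have h3 : ∑ k ∈ Finset.range (n + 1), D (e k * t ^ k) =
          (∑ k ∈ Finset.range n, ((k + 1 : ℕ) * e (k + 1)) * t ^ k) * D t
            + ∑ k ∈ Finset.range (n + 1), D (e k) * t ^ k := by
        simp only [Derivation.leibniz, Derivation.leibniz_pow, smul_eq_mul, nsmul_eq_mul]
        rw [Finset.sum_add_distrib]
        congr 1
        · rw [Finset.sum_range_succ', Finset.sum_mul]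
          simp only [Nat.cast_zero, zero_mul, mul_zero, add_zero, Nat.add_sub_cancel]
          exact Finset.sum_congr rfl fun k _ => by ring
        · exact Finset.sum_congr rfl fun k _ => by ring
      rw [h3] at h2
      refine (Ideal.add_mem_iff_left I ?_).mp h2
      exact I.sum_mem fun k hk => I.mul_mem_right _ (he k (Finset.mem_range.mp hk))
    have h4 := (Ideal.IsPrime.mem_or_mem ‹I.IsPrime› h1).resolve_right ht
    have h5 := ih (by omega) (fun k => (k + 1 : ℕ) * e (k + 1)) (fun k hk => by
      have : D (((k + 1 : ℕ) : MvPolynomial (Fin 2) K) * e (k + 1)) =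
          (k + 1 : ℕ) * D (e (k + 1)) := by
        rw [Derivation.leibniz, Derivation.map_natCast]; simp
      rw [this]
      exact I.mul_mem_left _ (he _ (by omega))) h4
    have h6 : ∀ k < n, e (k + 1) ∈ I := by
      intro k hk
      refine (Ideal.IsPrime.mem_or_mem ‹I.IsPrime› (h5 k hk)).resolve_left fun hmem => ?_
      obtain ⟨u, hu, -⟩ := exists_natCast_mul_eq_one (K := K) p (Nat.succ_pos k) (by omega)
      exact Ideal.IsPrime.ne_top ‹I.IsPrime›
        ((Ideal.eq_top_iff_one I).mpr (hu ▸ I.mul_mem_right _ hmem))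
    have h7 : e 0 ∈ I := by
      rw [Finset.sum_range_succ'] at hsum
      have := (Ideal.add_mem_iff_right I (I.sum_mem fun k hk =>
        I.mul_mem_right (t ^ (k + 1)) (h6 k (Finset.mem_range.mp hk)))).mp hsum
      simpa using this
    intro k hk
    cases k with
    | zero => exact h7
    | succ k => exact h6 k (by omega)

lemma coeff_eq_zero_of_sum_pow_eq_zero
    (D : Derivation K (MvPolynomial (Fin 2) K) (MvPolynomial (Fin 2) K))
    (t : MvPolynomial (Fin 2) K) (ht : D t ≠ 0)
    (e : ℕ → MvPolynomial (Fin 2) K) (he : ∀ k < p, D (e k) = 0)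
    (hsum : ∑ k ∈ Finset.range p, e k * t ^ k = 0) : ∀ k < p, e k = 0 := by
  have := coeff_mem_of_sum_pow_mem p D ⊥ (by simp) t (by simpa using ht) p le_rfl e
    (by simpa using he) (by simpa using hsum)
  simpa using this

/-- The powers `1, xⱼ, …, xⱼ ^ (p - 1)` generate `K[x,y]` over the kernel of `∂/∂xⱼ`, and the
coefficients inherit the vanishing of `∂/∂xᵢ`. -/
lemma exists_expansion (j : Fin 2) (q : MvPolynomial (Fin 2) K) :
    ∃ β : ℕ → MvPolynomial (Fin 2) K, q = ∑ k ∈ Finset.range p, β k * X j ^ k ∧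
      (∀ k, pderiv j (β k) = 0) ∧ ∀ i, pderiv i q = 0 → ∀ k < p, pderiv i (β k) = 0 := by
  have hp : 0 < p := (Fact.out : p.Prime).pos
  have key : ∃ β : ℕ → MvPolynomial (Fin 2) K, q = ∑ k ∈ Finset.range p, β k * X j ^ k ∧
      (∀ k, pderiv j (β k) = 0) := by
    induction q using MvPolynomial.induction_on' with
    | monomial m r =>
      refine ⟨fun k => if k = m j % p then monomial (m - Finsupp.single j (m j % p)) r else 0,
        ?_, ?_⟩
      · rw [Finset.sum_eq_single (m j % p)]
        · simp only [if_true]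
          rw [X_pow_eq_monomial, monomial_mul, mul_one]
          congr 2
          refine Finsupp.ext fun l => ?_
          by_cases hl : j = l
          · subst hl; simp [Nat.sub_add_cancel (Nat.mod_le _ _)]
          · simp [hl]
        · intro k _ hk; simp [hk]
        · intro h; exact absurd (Finset.mem_range.mpr (Nat.mod_lt _ hp)) h
      · intro k
        by_cases hk : k = m j % p
        · simp only [if_pos hk]
          rw [pderiv_monomial]
          have : (((m - Finsupp.single j (m j % p)) j : ℕ) : K) = 0 := by
            rw [CharP.cast_eq_zero_iff K p]
            simpa using Nat.dvd_sub_mod (m j)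
          rw [this]; simp
        · simp [hk]
    | add a b ha hb =>
      obtain ⟨β, h1, h2⟩ := ha
      obtain ⟨γ, h3, h4⟩ := hb
      refine ⟨fun k => β k + γ k, ?_, fun k => by simp [h2, h4]⟩
      conv_lhs => rw [h1, h3]
      rw [← Finset.sum_add_distrib]
      exact Finset.sum_congr rfl fun k _ => by ring
  obtain ⟨β, h1, h2⟩ := key
  refine ⟨β, h1, h2, fun i hi => ?_⟩
  by_cases hij : i = j
  · subst hij; exact fun k _ => h2 k
  refine coeff_eq_zero_of_sum_pow_eq_zero p (pderiv j) (X j) (by simp) (fun k => pderiv i (β k))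
    (fun k _ => by rw [pderiv_comm_apply, h2, map_zero]) ?_
  have h3 := congrArg (pderiv i) h1
  rw [hi, map_sum] at h3
  rw [h3]
  refine Finset.sum_congr rfl fun k _ => ?_
  rw [pderiv_mul, pderiv_pow, pderiv_X_of_ne (Ne.symm hij)]
  ring

/-- The kernel of `∂/∂xᵢ`, as a subalgebra. -/
noncomputable def pderivKer (i : Fin 2) : Subalgebra K (MvPolynomial (Fin 2) K) where
  carrier := {q | pderiv i q = 0}
  mul_mem' {a b} ha hb := by
    simp only [Set.mem_ofPred_eq] at *
    rw [pderiv_mul, ha, hb]; simp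
  add_mem' {a b} ha hb := by
    simp only [Set.mem_ofPred_eq] at *
    rw [map_add, ha, hb, add_zero]
  algebraMap_mem' r := by simp [algebraMap_eq]

/-- `K[x,y]` is generated by `p` elements over the kernel of `∂/∂xᵢ`, so any `p + 1` elements are
dependent. -/
lemma exists_relation (i : Fin 2) (v : ℕ → MvPolynomial (Fin 2) K) :
    ∃ r : ℕ → MvPolynomial (Fin 2) K, (∀ k, pderiv i (r k) = 0) ∧ (∃ k < p + 1, r k ≠ 0) ∧
      ∑ k ∈ Finset.range (p + 1), r k * v k = 0 := by
  classical
  have hspan : Submodule.span (pderivKer (K := K) i)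
      (((Finset.range p).image fun k => (X i : MvPolynomial (Fin 2) K) ^ k : Finset _) :
        Set (MvPolynomial (Fin 2) K)) = ⊤ := by
    rw [eq_top_iff]
    intro q _
    obtain ⟨β, h1, h2, -⟩ := exists_expansion p i q
    rw [h1]
    refine Submodule.sum_mem _ fun k hk => ?_
    exact Submodule.smul_mem _ (⟨β k, h2 k⟩ : pderivKer (K := K) i)
      (Submodule.subset_span (by simpa using ⟨k, Finset.mem_range.mp hk, rfl⟩))
  have hdep : ¬ LinearIndependent (pderivKer (K := K) i) (fun k : Fin (p + 1) => v k) := by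
    intro h
    have h1 := linearIndependent_le_span_finset _ h _ hspan
    rw [Cardinal.mk_fintype, Fintype.card_fin] at h1
    have h2 : p + 1 ≤ p := (Nat.cast_le.mp h1).trans (Finset.card_image_le.trans (by simp))
    omega
  rw [Fintype.not_linearIndependent_iff] at hdep
  obtain ⟨g, hg, k, hk⟩ := hdep
  refine ⟨fun k => if h : k < p + 1 then (g ⟨k, h⟩ : MvPolynomial (Fin 2) K) else 0, ?_, ?_, ?_⟩
  · intro k
    by_cases h : k < p + 1
    · simp only [h, dif_pos]; exact (g ⟨k, h⟩).2
    · simp [h]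
  · refine ⟨k, k.2, ?_⟩
    simp only [k.2, dif_pos]
    exact fun h => hk (Subtype.ext h)
  · rw [Finset.sum_range]
    simpa only [Subalgebra.smul_def, Fin.is_lt, dif_pos, smul_eq_mul] using hg


/-! ### The form dual to a derivation -/

/-- The coefficients `(d y, - d x)` of the `1`-form dual to `d`: when `d x` and `d y` are
coprime, `d` kills exactly the polynomials whose differential is a multiple of this form. -/
noncomputable def dualForm
    (d : Derivation K (MvPolynomial (Fin 2) K) (MvPolynomial (Fin 2) K)) :
    Fin 2 → MvPolynomial (Fin 2) K :=
  ![d (X 1), -d (X 0)]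

lemma exists_dualForm_ne_zero
    (d : Derivation K (MvPolynomial (Fin 2) K) (MvPolynomial (Fin 2) K)) (hd : d ≠ 0) :
    ∃ i, dualForm d i ≠ 0 := by
  by_contra! h
  have h0 := h 0
  have h1 := h 1
  simp only [dualForm, Matrix.cons_val_zero, Matrix.cons_val_one, neg_eq_zero] at h0 h1
  apply hd
  apply MvPolynomial.derivation_ext
  intro i
  fin_cases i <;> simp [h0, h1]

/-- The sufficient condition for `d q = 0`. -/
lemma apply_eq_zero_of_pderiv_eq
    (d : Derivation K (MvPolynomial (Fin 2) K) (MvPolynomial (Fin 2) K))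
    {q t : MvPolynomial (Fin 2) K} (h : ∀ i, pderiv i q = t * dualForm d i) : d q = 0 := by
  rw [derivation_eq_pderiv, h 0, h 1]
  simp only [dualForm, Matrix.cons_val_zero, Matrix.cons_val_one]
  ring

lemma apply_eq_zero_of_const
    (d : Derivation K (MvPolynomial (Fin 2) K) (MvPolynomial (Fin 2) K))
    {q : MvPolynomial (Fin 2) K} (h : ∀ i, pderiv i q = 0) : d q = 0 :=
  apply_eq_zero_of_pderiv_eq d (t := 0) (by simpa using h)

/-- Since mixed partial derivatives agree, `dq = t ω` forces `d t = - t d*`. -/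
lemma apply_add_mul_div_eq_zero
    (d : Derivation K (MvPolynomial (Fin 2) K) (MvPolynomial (Fin 2) K))
    {q t : MvPolynomial (Fin 2) K} (h : ∀ i, pderiv i q = t * dualForm d i) :
    d t + t * (pderiv 0 (d (X 0)) + pderiv 1 (d (X 1))) = 0 := by
  have h1 := pderiv_comm_apply 0 1 q
  rw [h 0, h 1] at h1
  simp only [dualForm, Matrix.cons_val_zero, Matrix.cons_val_one, pderiv_mul, map_neg] at h1
  rw [derivation_eq_pderiv d t]
  linear_combination -h1

lemma totalDegree_lt_of_pderiv_eq
    (d : Derivation K (MvPolynomial (Fin 2) K) (MvPolynomial (Fin 2) K)) (hd : d ≠ 0)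
    {q t : MvPolynomial (Fin 2) K} (h : ∀ i, pderiv i q = t * dualForm d i) (ht : t ≠ 0) :
    t.totalDegree < q.totalDegree := by
  obtain ⟨i, hi⟩ := exists_dualForm_ne_zero d hd
  have h1 := totalDegree_pderiv_lt i q (by rw [h]; exact mul_ne_zero ht hi)
  rw [h, totalDegree_mul_of_isDomain ht hi] at h1
  omega

/-- A chain `v 0, …, v (n - 1)` with `v 0 ≠ 0`, `∂ (v 0) = 0` and `∂ (v (k + 1)) = v k * w`,
`w ≠ 0`, is linearly independent over the kernel of `∂ = ∂/∂xᵢ`. -/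
lemma chain_independent (i : Fin 2) (w : MvPolynomial (Fin 2) K) (hw : w ≠ 0)
    (v : ℕ → MvPolynomial (Fin 2) K) (hv0 : v 0 ≠ 0) (hv0' : pderiv i (v 0) = 0)
    (n : ℕ) (hv : ∀ k, k + 1 < n → pderiv i (v (k + 1)) = v k * w)
    (r : ℕ → MvPolynomial (Fin 2) K) (hr : ∀ k, pderiv i (r k) = 0)
    (hsum : ∑ k ∈ Finset.range n, r k * v k = 0) : ∀ k < n, r k = 0 := by
  induction n generalizing r with
  | zero => intro k hk; omega
  | succ n ih =>
    have h1 := congrArg (pderiv i) hsum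
    rw [map_sum, map_zero, Finset.sum_range_succ', pderiv_mul, hr, hv0'] at h1
    have h2 : (∑ k ∈ Finset.range n, r (k + 1) * v k) * w = 0 := by
      rw [← h1, Finset.sum_mul, zero_mul, mul_zero, add_zero, add_zero]
      refine Finset.sum_congr rfl fun k hk => ?_
      rw [pderiv_mul, hr, hv k (by simpa using hk)]
      ring
    have h3 := ih (fun k hk => hv k (by omega)) (fun k => r (k + 1)) (fun k => hr _)
      ((mul_eq_zero.mp h2).resolve_right hw)
    rw [Finset.sum_range_succ', Finset.sum_eq_zero (fun k hk => by
      rw [h3 k (Finset.mem_range.mp hk), zero_mul]), zero_add] at hsum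
    intro k hk
    cases k with
    | zero => exact (mul_eq_zero.mp hsum).resolve_right hv0
    | succ k => exact h3 k (by omega)

section UFD

variable [UniqueFactorizationMonoid K]

/-- The converse of `apply_eq_zero_of_pderiv_eq`, by coprimality of `d x` and `d y`. -/
lemma exists_pderiv_eq
    (d : Derivation K (MvPolynomial (Fin 2) K) (MvPolynomial (Fin 2) K))
    (hcop : ∀ q : MvPolynomial (Fin 2) K, q ∣ d (X 0) → q ∣ d (X 1) → IsUnit q)
    (q : MvPolynomial (Fin 2) K) (hq : d q = 0) :
    ∃ t, ∀ i, pderiv i q = t * dualForm d i := by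
  suffices h : ∃ t, pderiv 0 q = t * d (X 1) ∧ pderiv 1 q = -(t * d (X 0)) by
    obtain ⟨t, h0, h1⟩ := h
    refine ⟨t, fun i => ?_⟩
    fin_cases i
    · simpa [dualForm] using h0
    · simpa [dualForm] using h1
  rw [derivation_eq_pderiv] at hq
  by_cases hb : d (X 1) = 0
  · have hu : IsUnit (d (X 0)) := hcop _ dvd_rfl (by simp [hb])
    obtain ⟨e, he⟩ := hu.exists_right_inv
    have h0 : pderiv 0 q = 0 := by
      rw [hb, zero_mul, add_zero] at hq
      exact (mul_eq_zero.mp hq).resolve_left hu.ne_zero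
    refine ⟨-(e * pderiv 1 q), by simp [hb, h0], ?_⟩
    linear_combination -(pderiv 1 q) * he
  · have hrel : IsRelPrime (d (X 1)) (d (X 0)) := fun q h1 h0 => hcop q h0 h1
    obtain ⟨t, ht⟩ := hrel.dvd_of_dvd_mul_left
      (show d (X 1) ∣ d (X 0) * pderiv 0 q from ⟨-pderiv 1 q, by linear_combination hq⟩)
    refine ⟨t, by rw [ht]; ring, ?_⟩
    apply mul_left_cancel₀ hb
    rw [ht] at hq
    linear_combination hq

/-! ### Divergence zero and Jacobian derivations -/

/-- Dividing differentials by `ω` again and again lowers the degree, so the last step before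
reaching zero gives an element whose differential is a constant multiple of `ω`. -/
lemma exists_const_multiple
    (d : Derivation K (MvPolynomial (Fin 2) K) (MvPolynomial (Fin 2) K)) (hd : d ≠ 0)
    (hcop : ∀ q : MvPolynomial (Fin 2) K, q ∣ d (X 0) → q ∣ d (X 1) → IsUnit q)
    (hdiv : pderiv (0 : Fin 2) (d (X 0)) + pderiv (1 : Fin 2) (d (X 1)) = 0)
    (f : MvPolynomial (Fin 2) K) (hf : d f = 0) (hfB : ∃ i, pderiv i f ≠ 0) :
    ∃ s c, c ≠ 0 ∧ (∀ i, pderiv i c = 0) ∧ ∀ i, pderiv i s = c * dualForm d i := by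
  induction hn : f.totalDegree using Nat.strong_induction_on generalizing f with
  | _ n ih =>
    obtain ⟨t, ht⟩ := exists_pderiv_eq d hcop f hf
    have ht0 : t ≠ 0 := by
      rintro rfl
      obtain ⟨i, hi⟩ := hfB
      exact hi (by simp [ht])
    by_cases hc : ∀ i, pderiv i t = 0
    · exact ⟨f, t, ht0, hc, ht⟩
    · have hdt := apply_add_mul_div_eq_zero d ht
      rw [hdiv, mul_zero, add_zero] at hdt
      exact ih _ (hn ▸ totalDegree_lt_of_pderiv_eq d hd ht ht0) t hdt (not_forall.mp hc) rfl

lemma exists_jacobian (p : ℕ) [Fact p.Prime] [CharP K p]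
    (d : Derivation K (MvPolynomial (Fin 2) K) (MvPolynomial (Fin 2) K)) (hd : d ≠ 0)
    (hcop : ∀ q : MvPolynomial (Fin 2) K, q ∣ d (X 0) → q ∣ d (X 1) → IsUnit q)
    (hdiv : pderiv (0 : Fin 2) (d (X 0)) + pderiv (1 : Fin 2) (d (X 1)) = 0)
    (f : MvPolynomial (Fin 2) K) (hf : d f = 0) (hfB : ∃ i, pderiv i f ≠ 0) :
    ∃ g, ∀ i, pderiv i g = dualForm d i := by
  obtain ⟨s, c, hc0, hc, hs⟩ := exists_const_multiple d hd hcop hdiv f hf hfB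
  obtain ⟨s0, hs0, g, hg⟩ := exists_const_part p s c hc (fun i => ⟨_, hs i⟩)
  refine ⟨g, fun i => mul_left_cancel₀ hc0 ?_⟩
  have h := congrArg (pderiv i) hg
  rw [map_sub, hs0, hs, pderiv_mul, hc] at h
  linear_combination -h

/-- If the form dual to `d` is `dg`, with coprime coefficients, then every element of the kernel
of `d` is a polynomial in `g` of degree less than `p` with constant coefficients. -/
lemma exists_expansion_of_jacobian
    (d : Derivation K (MvPolynomial (Fin 2) K) (MvPolynomial (Fin 2) K)) (hd : d ≠ 0)
    (hcop : ∀ q : MvPolynomial (Fin 2) K, q ∣ d (X 0) → q ∣ d (X 1) → IsUnit q)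
    (hdiv : pderiv (0 : Fin 2) (d (X 0)) + pderiv (1 : Fin 2) (d (X 1)) = 0)
    (g : MvPolynomial (Fin 2) K) (hg : ∀ i, pderiv i g = dualForm d i)
    (q : MvPolynomial (Fin 2) K) (hq : d q = 0) :
    ∃ c : ℕ → MvPolynomial (Fin 2) K, (∀ k i, pderiv i (c k) = 0) ∧
      q = ∑ k ∈ Finset.range p, c k * g ^ k := by
  -- `δ` plays the role of `d/dg` on the kernel of `d`
  have hex : ∀ q, ∃ t, d q = 0 → ∀ i, pderiv i q = t * dualForm d i := fun q => by
    by_cases h : d q = 0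
    · obtain ⟨t, ht⟩ := exists_pderiv_eq d hcop q h
      exact ⟨t, fun _ => ht⟩
    · exact ⟨0, fun h' => absurd h' h⟩
  choose δ hδ using hex
  have hδker : ∀ q, d q = 0 → d (δ q) = 0 := fun q h => by
    have := apply_add_mul_div_eq_zero d (hδ q h)
    rwa [hdiv, mul_zero, add_zero] at this
  have hker : ∀ n, d (δ^[n] q) = 0 := fun n => by
    induction n with
    | zero => exact hq
    | succ n ih => rw [Function.iterate_succ_apply']; exact hδker _ ih
  have hnil : ∃ n, δ^[n] q = 0 := by
    by_contra! hne
    have hlt : ∀ n, (δ^[n] q).totalDegree + n ≤ q.totalDegree := fun n => by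
      induction n with
      | zero => simp
      | succ n ih =>
        have := hne (n + 1)
        rw [Function.iterate_succ_apply'] at this ⊢
        have := totalDegree_lt_of_pderiv_eq d hd (hδ _ (hker n)) this
        omega
    have := hlt (q.totalDegree + 1)
    omega
  -- a chain of more than `p` nonzero iterates would exceed the rank over the kernel of `∂/∂xᵢ`
  have hnilp : ∃ n ≤ p, δ^[n] q = 0 := by
    classical
    refine ⟨Nat.find hnil, ?_, Nat.find_spec hnil⟩
    by_contra! hlt
    obtain ⟨m, hm⟩ : ∃ m, Nat.find hnil = m + 1 := ⟨Nat.find hnil - 1, by omega⟩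
    have hm0 : δ^[m] q ≠ 0 := Nat.find_min hnil (by omega)
    have hm1 : δ^[m + 1] q = 0 := hm ▸ Nat.find_spec hnil
    obtain ⟨i, hi⟩ := exists_dualForm_ne_zero d hd
    obtain ⟨r, hr, ⟨k, hk, hrk⟩, hsum⟩ := exists_relation p i (fun k => δ^[m - k] q)
    refine hrk (chain_independent i _ hi (fun k => δ^[m - k] q) hm0 ?_ (p + 1) ?_ r hr hsum k hk)
    · rw [Nat.sub_zero, hδ _ (hker m), ← Function.iterate_succ_apply' δ, hm1, zero_mul]
    · intro k hk
      rw [hδ _ (hker _), ← Function.iterate_succ_apply' δ, show (m - (k + 1)).succ = m - k by omega]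
  obtain ⟨n, hnp, hn⟩ := hnilp
  have key : ∀ n ≤ p, ∀ q, d q = 0 → δ^[n] q = 0 →
      ∃ c : ℕ → MvPolynomial (Fin 2) K, (∀ k i, pderiv i (c k) = 0) ∧
        q = ∑ k ∈ Finset.range n, c k * g ^ k := by
    intro n
    induction n with
    | zero => intro _ q _ h; exact ⟨0, by simp, by simpa using h⟩
    | succ n ih =>
      intro hnp q hq h
      obtain ⟨c, hc, hsum⟩ := ih (by omega) (δ q) (hδker q hq)
        (by rwa [← Function.iterate_succ_apply])
      have hinv : ∀ k, ∃ u : MvPolynomial (Fin 2) K,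
          (k < n → ((k + 1 : ℕ) : MvPolynomial (Fin 2) K) * u = 1) ∧ ∀ i, pderiv i u = 0 := by
        intro k
        by_cases hk : k < n
        · obtain ⟨u, h1, h2⟩ := exists_natCast_mul_eq_one (K := K) p (Nat.succ_pos k) (by omega)
          exact ⟨u, fun _ => h1, h2⟩
        · exact ⟨0, fun h => absurd h hk, by simp⟩
      choose u hu hu' using hinv
      -- subtract the primitive of `δ q` with respect to `g`
      set Q := ∑ k ∈ Finset.range n, (u k * c k) * g ^ (k + 1) with hQ
      have hQd : ∀ i, pderiv i (q - Q) = 0 := by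
        intro i
        rw [map_sub, hδ q hq, hsum, hQ, map_sum, Finset.sum_mul, ← Finset.sum_sub_distrib]
        refine Finset.sum_eq_zero fun k hk => ?_
        rw [pderiv_mul, pderiv_mul, hu', hc, pderiv_pow, Nat.add_sub_cancel, hg]
        linear_combination -(c k * g ^ k * dualForm d i) * hu k (Finset.mem_range.mp hk)
      refine ⟨fun k => if k = 0 then q - Q else u (k - 1) * c (k - 1), ?_, ?_⟩
      · intro k i
        by_cases hk : k = 0
        · simp only [hk, if_true]; exact hQd i
        · simp only [hk, if_false]; rw [pderiv_mul, hu', hc]; simp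
      · rw [Finset.sum_range_succ']
        simp [hQ]
  obtain ⟨c, hc, hsum⟩ := key n hnp q hq hn
  refine ⟨fun k => if k < n then c k else 0, fun k i => ?_, ?_⟩
  · by_cases hk : k < n <;> simp [hk, hc]
  · rw [hsum]
    rw [← Finset.sum_subset (Finset.range_mono hnp)]
    · refine Finset.sum_congr rfl fun k hk => ?_
      simp [Finset.mem_range.mp hk]
    · intro k _ hk
      simp [Finset.mem_range] at hk
      simp [hk]

/-! ### Primes dividing both partial derivatives -/


/-- If `∂π` is not divisible by the prime `π`, then a constant of `∂` divisible by `π` is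
divisible by `π ^ p`. -/
lemma exists_eq_pow_mul (i : Fin 2) (π : MvPolynomial (Fin 2) K) (hπ : Prime π)
    (hπi : ¬ π ∣ pderiv i π) (r : MvPolynomial (Fin 2) K) (hr : pderiv i r = 0) (hdvd : π ∣ r) :
    ∃ r', r = π ^ p * r' ∧ pderiv i r' = 0 := by
  have key : ∀ k, k + 1 ≤ p → π ^ (k + 1) ∣ r := by
    intro k
    induction k with
    | zero => intro _; simpa using hdvd
    | succ k ih =>
      intro hk
      obtain ⟨u, hu⟩ := ih (by omega)
      have h1 := congrArg (pderiv i) hu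
      rw [hr, pderiv_mul, pderiv_pow, Nat.add_sub_cancel] at h1
      have h2 : ((k + 1 : ℕ) : MvPolynomial (Fin 2) K) * pderiv i π * u + π * pderiv i u = 0 := by
        apply mul_left_cancel₀ (pow_ne_zero k hπ.ne_zero)
        linear_combination -h1
      obtain ⟨e, he, -⟩ := exists_natCast_mul_eq_one (K := K) p (Nat.succ_pos k) (by omega)
      have h3 : π ∣ pderiv i π * u :=
        ⟨-(e * pderiv i u), by linear_combination e * h2 - (pderiv i π * u) * he⟩
      obtain ⟨u', rfl⟩ := (hπ.dvd_or_dvd h3).resolve_left hπi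
      exact ⟨u', by rw [hu]; ring⟩
  have hp : 0 < p := (Fact.out : p.Prime).pos
  obtain ⟨r', hr'⟩ := key (p - 1) (by omega)
  rw [Nat.sub_add_cancel hp] at hr'
  refine ⟨r', hr', ?_⟩
  rw [hr', pderiv_mul, pderiv_pow_char, zero_mul, zero_add] at hr
  exact (mul_eq_zero.mp hr).resolve_left (pow_ne_zero _ hπ.ne_zero)

/-- `π`-adic uniqueness of expansions whose coefficients are divisible by `π ^ p` as soon as they
are divisible by `π`. -/
lemma dvd_of_pow_dvd_sum (π : MvPolynomial (Fin 2) K) (hπ : Prime π) (n : ℕ) (hn : n ≤ p)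
    (r : ℕ → MvPolynomial (Fin 2) K) (hr : ∀ k, π ∣ r k → π ^ p ∣ r k)
    (hsum : π ^ n ∣ ∑ k ∈ Finset.range n, r k * π ^ k) : ∀ k < n, π ∣ r k := by
  induction n generalizing r with
  | zero => intro k hk; omega
  | succ n ih =>
    have h0 : π ∣ r 0 := by
      rw [Finset.sum_range_succ'] at hsum
      have h1 : π ∣ ∑ k ∈ Finset.range n, r (k + 1) * π ^ (k + 1) :=
        Finset.dvd_sum fun k _ => (dvd_pow_self π (by omega)).mul_left _
      simpa using (dvd_add_right h1).mp ((dvd_pow_self π (by omega)).trans hsum)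
    have h2 : π ^ (n + 1) ∣ ∑ k ∈ Finset.range n, r (k + 1) * π ^ (k + 1) := by
      rw [Finset.sum_range_succ'] at hsum
      refine (dvd_add_left ?_).mp hsum
      simpa using (pow_dvd_pow π hn).trans (hr 0 h0)
    have h3 : ∑ k ∈ Finset.range n, r (k + 1) * π ^ (k + 1) =
        (∑ k ∈ Finset.range n, r (k + 1) * π ^ k) * π := by
      rw [Finset.sum_mul]
      exact Finset.sum_congr rfl fun k _ => by ring
    rw [h3, pow_succ] at h2
    have h4 := ih (by omega) (fun k => r (k + 1)) (fun k => hr _)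
      ((mul_dvd_mul_iff_right hπ.ne_zero).mp h2)
    intro k hk
    cases k with
    | zero => exact h0
    | succ k => exact h4 k (by omega)

/-- Rank comparison over the kernel `R` of `∂/∂xᵢ`: since `1, π, …, π ^ (p - 1), f` are dependent
over `R` while `π ∤ ∂π`, the class of `f` modulo `π` is a quotient of classes of elements of `R`. -/
lemma exists_linear_mod_prime_aux (p : ℕ) [Fact p.Prime] [CharP K p]
    (i : Fin 2) (π : MvPolynomial (Fin 2) K) (hπ : Prime π)
    (hπi : ¬ π ∣ pderiv i π) (f : MvPolynomial (Fin 2) K) :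
    ∃ r s, pderiv i r = 0 ∧ pderiv i s = 0 ∧ ¬ π ∣ r ∧ π ∣ s + r * f := by
  by_contra! hcon
  have hp : 0 < p := (Fact.out : p.Prime).pos
  have hstep : ∀ r : ℕ → MvPolynomial (Fin 2) K, (∀ k, pderiv i (r k) = 0) →
      ∑ k ∈ Finset.range p, r k * π ^ k + r p * f = 0 → ∀ k < p + 1, π ∣ r k := by
    intro r hr hsum
    have hpow : ∀ k, π ∣ r k → π ^ p ∣ r k := fun k hk => by
      obtain ⟨r', h, -⟩ := exists_eq_pow_mul p i π hπ hπi _ (hr k) hk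
      exact ⟨r', h⟩
    have hlast : π ∣ r p := by
      by_contra hnd
      apply hcon (r p) (r 0) (hr p) (hr 0) hnd
      obtain ⟨m, hm⟩ : ∃ m, p = m + 1 := ⟨p - 1, by omega⟩
      have h1 : ∑ k ∈ Finset.range p, r k * π ^ k
          = π * (∑ k ∈ Finset.range m, r (k + 1) * π ^ k) + r 0 := by
        rw [hm, Finset.sum_range_succ', Finset.mul_sum, pow_zero, mul_one]
        congr 1
        exact Finset.sum_congr rfl fun k _ => by ring
      rw [h1] at hsum
      exact ⟨-(∑ k ∈ Finset.range m, r (k + 1) * π ^ k), by linear_combination hsum⟩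
    have h2 := dvd_of_pow_dvd_sum p π hπ p le_rfl r hpow (by
      rw [eq_neg_of_add_eq_zero_left hsum, dvd_neg]
      exact (hpow p hlast).mul_right _)
    intro k hk
    rcases Nat.lt_succ_iff_lt_or_eq.mp hk with h | rfl
    · exact h2 k h
    · exact hlast
  -- descent: the coefficients of a relation are divisible by every power of `π`
  have hall : ∀ n, ∀ r : ℕ → MvPolynomial (Fin 2) K, (∀ k, pderiv i (r k) = 0) →
      ∑ k ∈ Finset.range p, r k * π ^ k + r p * f = 0 → ∀ k < p + 1, π ^ n ∣ r k := by
    intro n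
    induction n with
    | zero => intro r _ _ k _; simp
    | succ n ih =>
      intro r hr hsum
      have h1 := hstep r hr hsum
      have h2 : ∀ k, ∃ r', pderiv i r' = 0 ∧ (k < p + 1 → r k = π ^ p * r') := fun k => by
        by_cases hk : k < p + 1
        · obtain ⟨r', h, h'⟩ := exists_eq_pow_mul p i π hπ hπi _ (hr k) (h1 k hk)
          exact ⟨r', h', fun _ => h⟩
        · exact ⟨0, by simp, fun h => absurd h hk⟩
      choose r' hr' hrr' using h2
      have h3 : ∑ k ∈ Finset.range p, r' k * π ^ k + r' p * f = 0 := by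
        apply mul_left_cancel₀ (pow_ne_zero p hπ.ne_zero)
        rw [mul_zero, ← hsum, mul_add, Finset.mul_sum, hrr' p (by omega)]
        congr 1
        · refine Finset.sum_congr rfl fun k hk => ?_
          rw [hrr' k (by have := Finset.mem_range.mp hk; omega)]
          ring
        · ring
      intro k hk
      rw [hrr' k hk, pow_succ, mul_comm]
      exact mul_dvd_mul (dvd_pow_self π hp.ne') (ih r' hr' h3 k hk)
  obtain ⟨r, hr, ⟨k, hk, hrk⟩, hsum⟩ := exists_relation p i (fun k => if k < p then π ^ k else f)
  have hsum' : ∑ k ∈ Finset.range p, r k * π ^ k + r p * f = 0 := by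
    rw [← hsum, Finset.sum_range_succ]
    congr 1
    · exact Finset.sum_congr rfl fun k hk => by rw [if_pos (Finset.mem_range.mp hk)]
    · simp
  obtain ⟨n, hn⟩ := FiniteMultiplicity.of_prime_left hπ hrk
  exact hn (hall _ r hr hsum' k hk)

/-- If `π` divides both partial derivatives of `f`, then modulo `π` the class of `f` is a quotient
of classes of constants. The numerator and denominator obtained over the kernel of `∂/∂xᵢ` are
expanded in powers of `xⱼ`, and the expansion is compared term by term modulo `π` by means of the
Jacobian derivation of `π`. -/
lemma exists_linear_mod_prime (p : ℕ) [Fact p.Prime] [CharP K p]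
    (π : MvPolynomial (Fin 2) K) (hπ : Prime π)
    (i j : Fin 2) (hij : i ≠ j) (hπi : ¬ π ∣ pderiv i π)
    (f : MvPolynomial (Fin 2) K) (hf : ∀ l, π ∣ pderiv l f) :
    ∃ β γ, (∀ l, pderiv l β = 0) ∧ (∀ l, pderiv l γ = 0) ∧ ¬ π ∣ β ∧ π ∣ γ + β * f := by
  obtain ⟨r, s, hr, hs, hrπ, hdvd⟩ := exists_linear_mod_prime_aux p i π hπ hπi f
  obtain ⟨β, hβ, hβj, hβi⟩ := exists_expansion p j r
  obtain ⟨γ, hγ, hγj, hγi⟩ := exists_expansion p j s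
  have hconst : ∀ (β : ℕ → MvPolynomial (Fin 2) K), (∀ k, pderiv j (β k) = 0) →
      (∀ k < p, pderiv i (β k) = 0) → ∀ k < p, ∀ l, pderiv l (β k) = 0 := by
    intro β h1 h2 k hk l
    have hl : l = i ∨ l = j := by omega
    rcases hl with rfl | rfl
    · exact h2 k hk
    · exact h1 k
  have hβc := hconst β hβj (hβi i hr)
  have hγc := hconst γ hγj (hγi i hs)
  -- the Jacobian derivation of `π`, which descends modulo `π`
  let D : Derivation K (MvPolynomial (Fin 2) K) (MvPolynomial (Fin 2) K) :=
    pderiv i π • pderiv j - pderiv j π • pderiv i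
  have hD : ∀ q, D q = pderiv i π * pderiv j q - pderiv j π * pderiv i q := fun q => by simp [D]
  have : (Ideal.span {π}).IsPrime := (Ideal.span_singleton_prime hπ.ne_zero).mpr hπ
  have h := coeff_mem_of_sum_pow_mem p D (Ideal.span {π}) (fun q hq => by
      rw [Ideal.mem_span_singleton] at hq ⊢
      obtain ⟨t, rfl⟩ := hq
      rw [hD, pderiv_mul, pderiv_mul]
      exact ⟨pderiv i π * pderiv j t - pderiv j π * pderiv i t, by ring⟩)
    (X j) (by
      rw [Ideal.mem_span_singleton, hD, pderiv_X_self, pderiv_X_of_ne hij.symm]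
      simpa using hπi) p le_rfl (fun k => γ k + β k * f) (fun k hk => by
      rw [Ideal.mem_span_singleton, hD]
      simp only [map_add, pderiv_mul, hβc k hk, hγc k hk, zero_mul, zero_add]
      exact dvd_sub (((hf j).mul_left _).mul_left _) (((hf i).mul_left _).mul_left _)) (by
      rw [Ideal.mem_span_singleton]
      convert hdvd using 1
      conv_rhs => rw [hβ, hγ]
      rw [Finset.sum_mul, ← Finset.sum_add_distrib]
      exact Finset.sum_congr rfl fun k _ => by ring)
  have hk : ∃ k < p, ¬ π ∣ β k := by
    by_contra! hall
    apply hrπ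
    rw [hβ]
    exact Finset.dvd_sum fun k hk => (hall k (Finset.mem_range.mp hk)).mul_right _
  obtain ⟨k, hk, hkπ⟩ := hk
  exact ⟨β k, γ k, hβc k hk, hγc k hk, hkπ, Ideal.mem_span_singleton.mp (h k hk)⟩

/-- `K[x^p, y^p, f]` consists of the polynomials in `f` of degree less than `p` with constant
coefficients, because `f ^ p` is itself constant. -/
lemma mem_adjoin_insert_iff (f q : MvPolynomial (Fin 2) K) :
    q ∈ Algebra.adjoin K ({X 0 ^ p, X 1 ^ p, f} : Set (MvPolynomial (Fin 2) K)) ↔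
      ∃ c : ℕ → MvPolynomial (Fin 2) K, (∀ k i, pderiv i (c k) = 0) ∧
        q = ∑ k ∈ Finset.range p, c k * f ^ k := by
  have hp : 0 < p := (Fact.out : p.Prime).pos
  constructor
  · intro h
    have h1 : ∃ P : Polynomial (Algebra.adjoin K
        ({X 0 ^ p, X 1 ^ p} : Set (MvPolynomial (Fin 2) K))), q = Polynomial.aeval f P := by
      induction h using Algebra.adjoin_induction with
      | mem x hx =>
        rcases hx with rfl | rfl | rfl
        · exact ⟨Polynomial.C ⟨X 0 ^ p, Algebra.subset_adjoin (by simp)⟩, by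
            rw [Polynomial.aeval_C]; rfl⟩
        · exact ⟨Polynomial.C ⟨X 1 ^ p, Algebra.subset_adjoin (by simp)⟩, by
            rw [Polynomial.aeval_C]; rfl⟩
        · exact ⟨Polynomial.X, by simp⟩
      | algebraMap r =>
        exact ⟨Polynomial.C (algebraMap _ _ r), by rw [Polynomial.aeval_C]; rfl⟩
      | add x y _ _ hx hy =>
        obtain ⟨P, rfl⟩ := hx
        obtain ⟨Q, rfl⟩ := hy
        exact ⟨P + Q, by simp⟩
      | mul x y _ _ hx hy =>
        obtain ⟨P, rfl⟩ := hx
        obtain ⟨Q, rfl⟩ := hy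
        exact ⟨P * Q, by simp⟩
    obtain ⟨P, rfl⟩ := h1
    clear h
    induction P using Polynomial.induction_on' with
    | add P Q hP hQ =>
      obtain ⟨c, hc, hP⟩ := hP
      obtain ⟨e, he, hQ⟩ := hQ
      refine ⟨fun k => c k + e k, fun k i => by simp [hc, he], ?_⟩
      rw [map_add, hP, hQ, ← Finset.sum_add_distrib]
      exact Finset.sum_congr rfl fun k _ => by ring
    | monomial n b =>
      have hb := (mem_adjoin_iff p b.1).mp b.2
      refine ⟨fun k => if k = n % p then b.1 * (f ^ p) ^ (n / p) else 0, fun k i => ?_, ?_⟩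
      · by_cases hk : k = n % p
        · simp only [hk, if_true]
          rw [pderiv_mul, hb, pderiv_pow, pderiv_pow_char]
          simp
        · simp [hk]
      · rw [Finset.sum_eq_single (n % p)]
        · dsimp only
          rw [if_pos rfl, Polynomial.aeval_monomial, ← pow_mul, mul_assoc, ← pow_add,
            Nat.div_add_mod]
          rfl
        · intro k _ hk; simp [hk]
        · intro h; exact absurd (Finset.mem_range.mpr (Nat.mod_lt _ hp)) h
  · rintro ⟨c, hc, rfl⟩
    refine Subalgebra.sum_mem _ fun k _ => Subalgebra.mul_mem _ ?_
      (Subalgebra.pow_mem _ (Algebra.subset_adjoin (by simp)) _)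
    exact Algebra.adjoin_mono (by intro x; simp; tauto) ((mem_adjoin_iff p (c k)).mpr (hc k))

/-- Comparison of the coefficients of `f ^ m` in `(β f + γ) ^ m = ϖ ∑ cₖ fᵏ`. -/
lemma dvd_pow_of_pow_eq (f : MvPolynomial (Fin 2) K) (i : Fin 2) (hfi : pderiv i f ≠ 0)
    (β γ ϖ : MvPolynomial (Fin 2) K) (hβ : pderiv i β = 0) (hγ : pderiv i γ = 0)
    (hϖ : pderiv i ϖ = 0) (c : ℕ → MvPolynomial (Fin 2) K) (hc : ∀ k, pderiv i (c k) = 0)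
    (m : ℕ) (hm : m < p)
    (h : (γ + β * f) ^ m = ϖ * ∑ k ∈ Finset.range p, c k * f ^ k) : ϖ ∣ β ^ m := by
  have h1 := coeff_eq_zero_of_sum_pow_eq_zero p (pderiv i) f hfi
    (fun k => β ^ k * γ ^ (m - k) * (m.choose k : MvPolynomial (Fin 2) K) - ϖ * c k)
    (fun k _ => by
      simp only [map_sub, pderiv_mul, pderiv_pow, hβ, hγ, hϖ, hc, Derivation.map_natCast]
      simp) (by
      have h2 : ∑ k ∈ Finset.range p, β ^ k * γ ^ (m - k) *
          (m.choose k : MvPolynomial (Fin 2) K) * f ^ k = (γ + β * f) ^ m := by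
        rw [add_comm, add_pow]
        symm
        rw [← Finset.sum_subset (Finset.range_mono (show m + 1 ≤ p by omega))]
        · refine Finset.sum_congr rfl fun k _ => ?_
          rw [mul_pow]; ring
        · intro k _ hk
          rw [Nat.choose_eq_zero_of_lt (by simpa using hk)]
          simp
      simp only [sub_mul]
      rw [Finset.sum_sub_distrib, h2, h, Finset.mul_sum, sub_eq_zero]
      exact Finset.sum_congr rfl fun k _ => by ring) m hm
  simp only [Nat.sub_self, pow_zero, mul_one, Nat.choose_self, Nat.cast_one] at h1
  exact ⟨c m, sub_eq_zero.mp h1⟩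

/-- If `B[f]`, with `B` the ring of constants, is the kernel of a derivation, then no prime divides
both partial derivatives of `f`. -/
lemma not_prime_dvd_pderiv
    (d : Derivation K (MvPolynomial (Fin 2) K) (MvPolynomial (Fin 2) K))
    (f : MvPolynomial (Fin 2) K) (hfB : ∃ i, pderiv i f ≠ 0) (hdf : d f = 0)
    (hker : ∀ q, d q = 0 → ∃ c : ℕ → MvPolynomial (Fin 2) K, (∀ k i, pderiv i (c k) = 0) ∧
        q = ∑ k ∈ Finset.range p, c k * f ^ k)
    (π : MvPolynomial (Fin 2) K) (hπ : Prime π) (hπf : ∀ i, π ∣ pderiv i f) : False := by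
  have hp : 2 ≤ p := (Fact.out : p.Prime).two_le
  obtain ⟨i₀, hi₀⟩ := hfB
  have key : ∀ β γ ϖ e : MvPolynomial (Fin 2) K, (∀ l, pderiv l β = 0) → (∀ l, pderiv l γ = 0) →
      (∀ l, pderiv l ϖ = 0) → ϖ ≠ 0 → ∀ m < p, (γ + β * f) ^ m = ϖ * e → ϖ ∣ β ^ m := by
    intro β γ ϖ e hβ hγ hϖ hϖ0 m hm h
    have hde : d e = 0 := by
      have h1 := congrArg d h
      have hw : d (γ + β * f) = 0 := by
        rw [map_add, Derivation.leibniz, apply_eq_zero_of_const d hβ,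
          apply_eq_zero_of_const d hγ, hdf]
        simp
      rw [Derivation.leibniz_pow, hw, Derivation.leibniz, apply_eq_zero_of_const d hϖ] at h1
      simp only [smul_eq_mul, mul_zero, smul_zero, add_zero] at h1
      exact (mul_eq_zero.mp h1.symm).resolve_left hϖ0
    obtain ⟨c, hc, rfl⟩ := hker e hde
    exact dvd_pow_of_pow_eq p f i₀ hi₀ β γ ϖ (hβ _) (hγ _) (hϖ _) c (fun k => hc k _) m hm h
  by_cases hπc : ∀ i, pderiv i π = 0
  · obtain ⟨s0, hs0, e, he⟩ := exists_const_part p f π hπc hπf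
    have := key 1 (-s0) π e (by simp) (by simpa using hs0) hπc hπ.ne_zero 1 (by omega)
      (by rw [← he]; ring)
    exact hπ.not_isUnit (isUnit_of_dvd_one (by simpa using this))
  · obtain ⟨i, hi⟩ := not_forall.mp hπc
    have hπi := not_dvd_pderiv i π hi
    obtain ⟨j, hij⟩ : ∃ j : Fin 2, i ≠ j := ⟨i + 1, by omega⟩
    obtain ⟨β, γ, hβ, hγ, hβπ, v, hv⟩ := exists_linear_mod_prime p π hπ i j hij hπi f hπf
    -- differentiating `γ + β f = π v` shows that `π` divides `v`
    have hπv : π ∣ v := by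
      have h1 := congrArg (pderiv i) hv
      rw [map_add, pderiv_mul, pderiv_mul, hγ, hβ, zero_mul, zero_add, zero_add] at h1
      have h2 : π ∣ pderiv i π * v := by
        have : pderiv i π * v = β * pderiv i f - π * pderiv i v := by linear_combination -h1
        rw [this]
        exact dvd_sub ((hπf i).mul_left _) (dvd_mul_right _ _)
      exact (hπ.dvd_or_dvd h2).resolve_left hπi
    obtain ⟨v', rfl⟩ := hπv
    -- `π ^ p` divides `(γ + β f) ^ (p - 1)` because `2 (p - 1) ≥ p`
    have h3 := key β γ (π ^ p) (π ^ (p - 2) * v' ^ (p - 1)) hβ hγ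
      (fun l => pderiv_pow_char p l π) (pow_ne_zero _ hπ.ne_zero) (p - 1) (by omega) (by
        rw [hv, ← mul_assoc, mul_pow, ← mul_assoc, ← pow_add, ← pow_two, ← pow_mul]
        congr 2
        omega)
    exact hβπ (hπ.dvd_of_dvd_pow ((dvd_pow_self π (by omega)).trans h3))

end UFD

end Helpers

/-- Theorem 2.  `K` a UFD of characteristic `p > 0`, `d` a nonzero
`K`-derivation of `K[x,y]` with `d(x), d(y)` coprime.  TFAE:
(1) `K[x,y]^d = K[x^p,y^p,f]` for some `f ∈ K[x,y] \ K[x^p,y^p]`;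
(2) `d` is a Jacobian derivation;
(3) `d* = 0` and `K[x,y]^d ≠ K[x^p,y^p]`;
(4) `d(f) = 0` and `d(f̄) = 0` for some `f ∈ K[x,y] \ K[x^p,y^p]`, where
    `f̄ = gcd(∂f/∂x, ∂f/∂y)`. -/
theorem theorem2_two_variables
    {K : Type*} [CommRing K] [IsDomain K] [UniqueFactorizationMonoid K]
    (p : ℕ) [Fact p.Prime] [CharP K p]
    (d : Derivation K (MvPolynomial (Fin 2) K) (MvPolynomial (Fin 2) K))
    (hd : d ≠ 0)
    (hcop : ∀ q : MvPolynomial (Fin 2) K, q ∣ d (X 0) → q ∣ d (X 1) → IsUnit q) :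
    [(∃ f : MvPolynomial (Fin 2) K,
        f ∉ Algebra.adjoin K ({X 0 ^ p, X 1 ^ p} : Set (MvPolynomial (Fin 2) K)) ∧
        {q : MvPolynomial (Fin 2) K | d q = 0} =
          ↑(Algebra.adjoin K ({X 0 ^ p, X 1 ^ p, f} : Set (MvPolynomial (Fin 2) K)))),
      (∃ g : MvPolynomial (Fin 2) K, ∀ q,
        d q = pderiv (0 : Fin 2) g * pderiv (1 : Fin 2) q
            - pderiv (1 : Fin 2) g * pderiv (0 : Fin 2) q),
      (pderiv (0 : Fin 2) (d (X 0)) + pderiv (1 : Fin 2) (d (X 1)) = 0 ∧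
        {q : MvPolynomial (Fin 2) K | d q = 0} ≠
          ↑(Algebra.adjoin K ({X 0 ^ p, X 1 ^ p} : Set (MvPolynomial (Fin 2) K)))),
      (∃ f fbar : MvPolynomial (Fin 2) K,
        f ∉ Algebra.adjoin K ({X 0 ^ p, X 1 ^ p} : Set (MvPolynomial (Fin 2) K)) ∧
        d f = 0 ∧
        fbar ∣ pderiv (0 : Fin 2) f ∧ fbar ∣ pderiv (1 : Fin 2) f ∧
        (∀ q : MvPolynomial (Fin 2) K,
          q ∣ pderiv (0 : Fin 2) f → q ∣ pderiv (1 : Fin 2) f → q ∣ fbar) ∧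
        d fbar = 0)].TFAE := by
  have hp0 : ∀ f : MvPolynomial (Fin 2) K,
      f ∉ Algebra.adjoin K ({X 0 ^ p, X 1 ^ p} : Set (MvPolynomial (Fin 2) K)) ↔
        ∃ i, pderiv i f ≠ 0 := fun f => by rw [mem_adjoin_iff, not_forall]
  have hne : ∀ f : MvPolynomial (Fin 2) K, d f = 0 → (∃ i, pderiv i f ≠ 0) →
      {q : MvPolynomial (Fin 2) K | d q = 0} ≠
        ↑(Algebra.adjoin K ({X 0 ^ p, X 1 ^ p} : Set (MvPolynomial (Fin 2) K))) := by
    intro f hf hfB heq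
    exact (hp0 f).mpr hfB ((Set.ext_iff.mp heq f).mp hf)
  have hunit : ∀ k : MvPolynomial (Fin 2) K, IsUnit k → ∀ i, pderiv i k = 0 := by
    intro k hk i
    obtain ⟨r, -, rfl⟩ := isUnit_iff_eq_C_of_isReduced.mp hk
    exact pderiv_C
  have hjac : ∀ g : MvPolynomial (Fin 2) K,
      (∀ q, d q = pderiv (0 : Fin 2) g * pderiv (1 : Fin 2) q
            - pderiv (1 : Fin 2) g * pderiv (0 : Fin 2) q) ↔ ∀ i, pderiv i g = dualForm d i := by
    intro g
    constructor
    · intro h i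
      have h0 := h (X 0)
      have h1 := h (X 1)
      fin_cases i <;> simp [dualForm, h0, h1]
    · intro h q
      rw [derivation_eq_pderiv d q, h 0, h 1]
      simp only [dualForm, Matrix.cons_val_zero, Matrix.cons_val_one]
      ring
  have hdivg : ∀ g : MvPolynomial (Fin 2) K, (∀ i, pderiv i g = dualForm d i) →
      pderiv (0 : Fin 2) (d (X 0)) + pderiv (1 : Fin 2) (d (X 1)) = 0 := by
    intro g hg
    have := apply_add_mul_div_eq_zero d (q := g) (t := 1) (by simpa using hg)
    simpa using this
  tfae_have 1 → 2 := by
    rintro ⟨f, hfB, hker⟩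
    rw [hp0] at hfB
    have hker' : ∀ q, d q = 0 ↔
        q ∈ Algebra.adjoin K ({X 0 ^ p, X 1 ^ p, f} : Set (MvPolynomial (Fin 2) K)) := by
      intro q
      exact Set.ext_iff.mp hker q
    have hdf : d f = 0 := (hker' f).mpr (Algebra.subset_adjoin (by simp))
    obtain ⟨h, hh⟩ := exists_pderiv_eq d hcop f hdf
    have hu : IsUnit h := by
      by_contra hnu
      have h0 : h ≠ 0 := by
        rintro rfl
        obtain ⟨i, hi⟩ := hfB
        exact hi (by simp [hh])
      obtain ⟨π, hπ, hπh⟩ := WfDvdMonoid.exists_irreducible_factor hnu h0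
      exact not_prime_dvd_pderiv p d f hfB hdf
        (fun q hq => (mem_adjoin_insert_iff p f q).mp ((hker' q).mp hq)) π
        (UniqueFactorizationMonoid.irreducible_iff_prime.mp hπ)
        (fun i => by rw [hh]; exact hπh.mul_right _)
    obtain ⟨e, he⟩ := hu.exists_right_inv
    refine ⟨e * f, (hjac _).mpr fun i => ?_⟩
    rw [pderiv_mul, hunit e (IsUnit.of_mul_eq_one_right h he), hh]
    linear_combination (dualForm d i) * he
  tfae_have 2 → 1 := by
    rintro ⟨g, hg⟩
    rw [hjac] at hg
    obtain ⟨i, hi⟩ := exists_dualForm_ne_zero d hd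
    refine ⟨g, (hp0 g).mpr ⟨i, by rwa [hg]⟩, Set.ext fun q => ?_⟩
    have hdg : d g = 0 := apply_eq_zero_of_pderiv_eq d (t := 1) (by simpa using hg)
    rw [SetLike.mem_coe, mem_adjoin_insert_iff]
    constructor
    · exact fun hq => exists_expansion_of_jacobian p d hd hcop (hdivg g hg) g hg q hq
    · rintro ⟨c, hc, rfl⟩
      change d _ = 0
      rw [map_sum]
      refine Finset.sum_eq_zero fun k _ => ?_
      rw [Derivation.leibniz, Derivation.leibniz_pow, hdg, apply_eq_zero_of_const d (hc k)]
      simp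
  tfae_have 2 → 3 := by
    rintro ⟨g, hg⟩
    rw [hjac] at hg
    obtain ⟨i, hi⟩ := exists_dualForm_ne_zero d hd
    exact ⟨hdivg g hg, hne g (apply_eq_zero_of_pderiv_eq d (t := 1) (by simpa using hg))
      ⟨i, by rwa [hg]⟩⟩
  have hex : {q : MvPolynomial (Fin 2) K | d q = 0} ≠
      ↑(Algebra.adjoin K ({X 0 ^ p, X 1 ^ p} : Set (MvPolynomial (Fin 2) K))) →
      ∃ f, d f = 0 ∧ ∃ i, pderiv i f ≠ 0 := by
    intro h
    by_contra! hcon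
    refine h (Set.ext fun q => ?_)
    rw [SetLike.mem_coe, mem_adjoin_iff]
    exact ⟨fun hq => hcon q hq, fun hq => apply_eq_zero_of_const d hq⟩
  tfae_have 3 → 2 := by
    rintro ⟨hdiv, hker⟩
    obtain ⟨f, hf, hfB⟩ := hex hker
    obtain ⟨g, hg⟩ := exists_jacobian p d hd hcop hdiv f hf hfB
    exact ⟨g, (hjac g).mpr hg⟩
  tfae_have 2 → 4 := by
    rintro ⟨g, hg⟩
    rw [hjac] at hg
    obtain ⟨i, hi⟩ := exists_dualForm_ne_zero d hd
    refine ⟨g, 1, (hp0 g).mpr ⟨i, by rwa [hg]⟩,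
      apply_eq_zero_of_pderiv_eq d (t := 1) (by simpa using hg), one_dvd _, one_dvd _, ?_, by simp⟩
    intro q h0 h1
    rw [hg] at h0 h1
    simp only [dualForm, Matrix.cons_val_zero, Matrix.cons_val_one, dvd_neg] at h0 h1
    exact (hcop q h1 h0).dvd
  tfae_have 4 → 3 := by
    rintro ⟨f, fbar, hfB, hf, hb0, hb1, hgcd, hdb⟩
    rw [hp0] at hfB
    refine ⟨?_, hne f hf hfB⟩
    obtain ⟨h, hh⟩ := exists_pderiv_eq d hcop f hf
    have h0 : h ≠ 0 := by
      rintro rfl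
      obtain ⟨i, hi⟩ := hfB
      exact hi (by simp [hh])
    obtain ⟨k, rfl⟩ := hgcd h ⟨_, hh 0⟩ ⟨_, hh 1⟩
    rw [hh, mul_dvd_mul_iff_left h0] at hb0 hb1
    simp only [dualForm, Matrix.cons_val_zero, Matrix.cons_val_one, dvd_neg] at hb0 hb1
    have hk := hcop k hb1 hb0
    rw [Derivation.leibniz, apply_eq_zero_of_const d (hunit k hk), smul_zero, zero_add,
      smul_eq_mul] at hdb
    have hdh := (mul_eq_zero.mp hdb).resolve_left hk.ne_zero
    have := apply_add_mul_div_eq_zero d hh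
    rw [hdh, zero_add] at this
    exact (mul_eq_zero.mp this).resolve_left h0
  tfae_finish
end

section
/- Let K be a UFD of characteristic p > 0 and let d be a nonzero K-derivation of K[x,y] such that d(x) and d(y) are coprime. If there exists f ∈ K[x,y] \ K[x^p,y^p] such that d(f) = 0 and d(f̄) = 0, where f̄ = gcd(∂f/∂x, ∂f/∂y), then the divergence of d is zero: d* = 0. -/
/-!
Write `P = d x`, `Q = d y`, `f_x = g a`, `f_y = g b` with `g` the gcd of the partial derivatives.
Since `f` is not in `K[x^p, y^p]`, one of its partial derivatives is nonzero
(`mem_adjoin_of_pderiv_eq_zero`), so `g ≠ 0` and `a`, `b` are coprime. From `d f = 0` one gets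
`P a + Q b = 0`, and as both pairs are coprime, `P = -c b` and `Q = c a` for a unit `c`
(`exists_eq_mul_of_isRelPrime`); the units of `K[x, y]` are constants. Hence `d* = c (a_y - b_x)`.
Comparing the mixed derivatives `(g a)_y = (g b)_x` gives
`c g (a_y - b_x) = c (g_x b - g_y a) = -d g = 0`, and `g` cancels.
-/

open MvPolynomial

lemma derivation_apply_eq {K : Type*} [CommRing K]
    (d : Derivation K (MvPolynomial (Fin 2) K) (MvPolynomial (Fin 2) K))
    (h : MvPolynomial (Fin 2) K) :
    d h = d (X 0) * pderiv 0 h + d (X 1) * pderiv 1 h := by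
  have : d = d (X 0) • pderiv 0 + d (X 1) • pderiv 1 := by
    apply MvPolynomial.derivation_ext
    intro i
    fin_cases i <;> simp [pderiv_X]
  conv_lhs => rw [this]
  simp

lemma pderiv_zero_pderiv_one {K : Type*} [CommRing K] (f : MvPolynomial (Fin 2) K) :
    pderiv 1 (pderiv 0 f) = pderiv 0 (pderiv 1 f) := by
  -- The commutator of two derivations is a derivation, and this one kills the variables.
  have : ⁅pderiv (R := K) (1 : Fin 2), pderiv (R := K) (0 : Fin 2)⁆ = 0 := by
    apply MvPolynomial.derivation_ext
    intro i
    fin_cases i <;> simp [Derivation.commutator_apply, pderiv_X]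
  have h := congrArg (fun D => D f) this
  simpa [Derivation.commutator_apply, sub_eq_zero] using h

lemma dvd_of_pderiv_eq_zero {K : Type*} [CommRing K] [IsDomain K] (p : ℕ) [CharP K p]
    {f : MvPolynomial (Fin 2) K} {i : Fin 2} (h : pderiv i f = 0)
    {m : Fin 2 →₀ ℕ} (hm : m ∈ f.support) : p ∣ m i := by
  by_cases hmi : m i = 0
  · simp [hmi]
  have h1 := congrArg (coeff (m - Finsupp.single i 1)) h
  rw [coeff_pderiv, coeff_zero] at h1
  have h2 : m - Finsupp.single i 1 + Finsupp.single i 1 = m :=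
    tsub_add_cancel_of_le (by simpa [Finsupp.single_le_iff] using Nat.one_le_iff_ne_zero.2 hmi)
  have h3 : (m - Finsupp.single i 1 : Fin 2 →₀ ℕ) i + 1 = m i := by
    simp; omega
  rw [h2] at h1
  have h4 : ((m i : ℕ) : K) = 0 := by
    rw [← h3]; push_cast
    exact (mul_eq_zero.1 h1).resolve_left (mem_support_iff.1 hm)
  exact (CharP.cast_eq_zero_iff K p _).1 h4

lemma mem_adjoin_of_pderiv_eq_zero {K : Type*} [CommRing K] [IsDomain K] (p : ℕ) [CharP K p]
    {f : MvPolynomial (Fin 2) K} (h0 : pderiv 0 f = 0) (h1 : pderiv 1 f = 0) :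
    f ∈ Algebra.adjoin K ({X 0 ^ p, X 1 ^ p} : Set (MvPolynomial (Fin 2) K)) := by
  rw [f.as_sum]
  refine Subalgebra.sum_mem _ fun m hm => ?_
  obtain ⟨k, hk⟩ := dvd_of_pderiv_eq_zero p h0 hm
  obtain ⟨l, hl⟩ := dvd_of_pderiv_eq_zero p h1 hm
  rw [monomial_eq, Finsupp.prod_fintype _ _ (by simp), Fin.prod_univ_two, hk, hl, pow_mul, pow_mul]
  refine mul_mem (Subalgebra.algebraMap_mem _ _) (mul_mem (pow_mem ?_ _) (pow_mem ?_ _)) <;>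
    exact Algebra.subset_adjoin (by simp)

/-- Both `a ∣ Q` and `b ∣ P` by coprimality; the common cofactor divides `P` and `Q`, so it is a
unit. The cases `a = 0` and `b = 0` are allowed. -/
lemma exists_eq_mul_of_isRelPrime {R : Type*} [CommRing R] [IsDomain R] [DecompositionMonoid R]
    {P Q a b : R} (hPQ : IsRelPrime P Q) (hab : IsRelPrime a b) (h : P * a + Q * b = 0) :
    ∃ c, IsUnit c ∧ P = -(c * b) ∧ Q = c * a := by
  obtain ⟨c, hc⟩ : a ∣ Q := hab.dvd_of_dvd_mul_right ⟨-P, by linear_combination h⟩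
  obtain ⟨e, he⟩ : b ∣ P := hab.symm.dvd_of_dvd_mul_right ⟨-Q, by linear_combination h⟩
  have key : a * (b * (e + c)) = 0 := by
    rw [hc, he] at h; linear_combination h
  rcases mul_eq_zero.1 key with ha | hbe
  · refine ⟨-e, ?_, by rw [he]; ring, by rw [hc, ha]; ring⟩
    exact (hPQ (he ▸ dvd_mul_left e b) (by simp [hc, ha])).neg
  · rcases mul_eq_zero.1 hbe with hb | hec
    · refine ⟨c, ?_, by rw [he, hb]; ring, by rw [hc]; ring⟩
      exact hPQ (by simp [he, hb]) (hc ▸ dvd_mul_left c a)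
    · have hP : P = -(c * b) := by rw [he]; linear_combination b * hec
      exact ⟨c, hPQ (hP ▸ (dvd_mul_right c b).neg_right) (hc ▸ dvd_mul_left c a), hP,
        by rw [hc]; ring⟩

/-- (4) ⇒ (3, divergence part) of Theorem 2.  `K` a UFD of
characteristic `p > 0`, `d` a nonzero `K`-derivation of `K[x,y]` with
`d(x), d(y)` coprime.  If `d(f) = 0` and `d(f̄) = 0` for some
`f ∈ K[x,y] \ K[x^p,y^p]`, where `f̄ = gcd(∂f/∂x, ∂f/∂y)`, then `d* = 0`. -/
theorem theorem2_4_implies_zero_divergence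
    {K : Type*} [CommRing K] [IsDomain K] [UniqueFactorizationMonoid K]
    (p : ℕ) [Fact p.Prime] [CharP K p]
    (d : Derivation K (MvPolynomial (Fin 2) K) (MvPolynomial (Fin 2) K))
    (hd : d ≠ 0)
    (hcop : ∀ q : MvPolynomial (Fin 2) K, q ∣ d (X 0) → q ∣ d (X 1) → IsUnit q)
    (f fbar : MvPolynomial (Fin 2) K)
    (hf : f ∉ Algebra.adjoin K ({X 0 ^ p, X 1 ^ p} : Set (MvPolynomial (Fin 2) K)))
    (hdf : d f = 0)
    (hfbar₁ : fbar ∣ pderiv (0 : Fin 2) f)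
    (hfbar₂ : fbar ∣ pderiv (1 : Fin 2) f)
    (hfbar₃ : ∀ q : MvPolynomial (Fin 2) K,
      q ∣ pderiv (0 : Fin 2) f → q ∣ pderiv (1 : Fin 2) f → q ∣ fbar)
    (hdfbar : d fbar = 0) :
    pderiv (0 : Fin 2) (d (X 0)) + pderiv (1 : Fin 2) (d (X 1)) = 0 := by
  obtain ⟨a, ha⟩ := hfbar₁
  obtain ⟨b, hb⟩ := hfbar₂
  have hg : fbar ≠ 0 := by
    rintro rfl
    exact hf (mem_adjoin_of_pderiv_eq_zero p (by simpa using ha) (by simpa using hb))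
  have hab : IsRelPrime a b := by
    intro q hqa hqb
    have h := hfbar₃ (fbar * q) (ha ▸ mul_dvd_mul_left _ hqa) (hb ▸ mul_dvd_mul_left _ hqb)
    obtain ⟨r, hr⟩ := h
    exact IsUnit.of_mul_eq_one r (mul_left_cancel₀ hg (by linear_combination -hr))
  rw [derivation_apply_eq] at hdf hdfbar
  have hlin : d (X 0) * a + d (X 1) * b = 0 := by
    apply mul_left_cancel₀ hg
    rw [ha, hb] at hdf
    linear_combination hdf
  obtain ⟨c, hc, hP, hQ⟩ := exists_eq_mul_of_isRelPrime (fun q h0 h1 => hcop q h0 h1) hab hlin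
  obtain ⟨u, -, rfl⟩ := MvPolynomial.isUnit_iff_eq_C_of_isReduced.1 hc
  have hmix := pderiv_zero_pderiv_one f
  rw [ha, hb, Derivation.leibniz, Derivation.leibniz] at hmix
  simp only [smul_eq_mul] at hmix
  rw [hP, hQ] at hdfbar ⊢
  rw [map_neg, Derivation.leibniz, Derivation.leibniz]
  simp only [pderiv_C, smul_eq_mul]
  apply mul_left_cancel₀ hg
  linear_combination C u * hmix - hdfbar
end
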